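/- arXiv:2511.06207 — 2 statements merged into one kernel-verified Lean document; each statement's English description precedes it below -/
import Mathlib

section
/- Let (T_i)_{i=1}^∞ be a sequence of bounded linear operators from a separable Banach space X to a normed linear space Y. If the mean asymptotic relation MAsym(T_i) is dense in X×X and (T_i) is mean sensitive, then (T_i) has a dense absolutely mean irregular manifold, i.e., there exists a vector subspace Z of X that is dense in X and such that every non-zero vector of Z is absolutely mean irregular. -/
open Filter Topology

variable {X Y : Type*} [NormedAddCommGroup X] [NormedSpace ℝ X]
  [NormedAddCommGroup Y] [NormedSpace ℝ Y]

/-- The Cesàro average `(1/n) ∑_{i=1}^{n} ‖T i x - T i y‖`. -/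
noncomputable def mavg (T : ℕ → X →L[ℝ] Y) (x y : X) (n : ℕ) : ℝ :=
  (∑ i ∈ Finset.Icc 1 n, ‖T i x - T i y‖) / n

/-- The Cesàro average `(1/n) ∑_{i=1}^{n} ‖T i x‖`. -/
noncomputable def avg (T : ℕ → X →L[ℝ] Y) (x : X) (n : ℕ) : ℝ :=
  (∑ i ∈ Finset.Icc 1 n, ‖T i x‖) / n

/-- `limsup_n (1/n) ∑_{i=1}^{n} ‖T i x - T i y‖`, computed in `EReal`. -/
noncomputable def msup (T : ℕ → X →L[ℝ] Y) (x y : X) : EReal :=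
  Filter.limsup (fun n => (mavg T x y n : EReal)) Filter.atTop

/-- `liminf_n (1/n) ∑_{i=1}^{n} ‖T i x - T i y‖`, computed in `EReal`. -/
noncomputable def minf (T : ℕ → X →L[ℝ] Y) (x y : X) : EReal :=
  Filter.liminf (fun n => (mavg T x y n : EReal)) Filter.atTop

/-- `limsup_n (1/n) ∑_{i=1}^{n} ‖T i x‖`, computed in `EReal`. -/
noncomputable def asup (T : ℕ → X →L[ℝ] Y) (x : X) : EReal :=
  Filter.limsup (fun n => (avg T x n : EReal)) Filter.atTop

/-- `liminf_n (1/n) ∑_{i=1}^{n} ‖T i x‖`, computed in `EReal`. -/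
noncomputable def ainf (T : ℕ → X →L[ℝ] Y) (x : X) : EReal :=
  Filter.liminf (fun n => (avg T x n : EReal)) Filter.atTop

/-- Mean sensitivity of the sequence `(T i)`. -/
def MeanSensitive (T : ℕ → X →L[ℝ] Y) : Prop :=
  ∃ δ : ℝ, 0 < δ ∧ ∀ x : X, ∀ ε : ℝ, 0 < ε →
    ∃ y : X, ‖x - y‖ < ε ∧ (δ : EReal) < msup T x y

/-!
The averages `x ↦ (1/n) ∑_{i=1}^n ‖T i x‖` form a sequence of continuous seminorms `p n` which tends
to zero on a dense subspace but takes arbitrarily large values on every neighbourhood of `0`. The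
manifold is the span of a generic sequence `x : ℕ → X`, in the sense of Baire category in the space
of all sequences. Generically `x` has dense range, and `p n (x i) → 0` for all `i` along common
times `n`. Moreover, for each `j` there are times along which `p n (x j)` blows up while every other
`p n (x i)` stays bounded: approximate `x` by a sequence in the dense subspace and perturb its
`j`-th entry alone. Along these times `p n` is unbounded on every linear combination in which `x j`
has a non-zero coefficient.
-/

section EReal

variable {α : Type*} {l l' : Filter α} {u : α → ℝ}

theorem liminf_coe_ereal_eq_zero_of_tendsto [l'.NeBot] (hl : l' ≤ l) (hu : ∀ a, 0 ≤ u a)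
    (h : Tendsto u l' (𝓝 0)) : liminf (fun a => (u a : EReal)) l = 0 := by
  refine le_antisymm ?_ (le_liminf_of_le (h := .of_forall fun a => EReal.coe_nonneg.2 (hu a)))
  calc liminf (fun a => (u a : EReal)) l
      ≤ liminf (fun a => (u a : EReal)) l' := liminf_le_liminf_of_le hl
    _ = 0 := ((continuous_coe_real_ereal.tendsto 0).comp h).liminf_eq

theorem limsup_coe_ereal_eq_top_of_not_isBoundedUnder (h : ¬ l.IsBoundedUnder (· ≤ ·) u) :
    limsup (fun a => (u a : EReal)) l = ⊤ := by
  contrapose! h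
  obtain ⟨C, hC, -⟩ := EReal.lt_iff_exists_real_btwn.1 (lt_top_iff_ne_top.2 h)
  exact isBoundedUnder_of_eventually_le
    ((eventually_lt_of_limsup_lt hC).mono fun a ha => (EReal.coe_lt_coe_iff.1 ha).le)

end EReal

theorem exists_notMem_of_mem_span_range {ι R M : Type*} [DivisionRing R] [AddCommGroup M]
    [Module R M] {x : ι → M} {B : ι → Submodule R M} (hB : ∀ i j, x i ∈ B j ↔ i ≠ j) {z : M}
    (hz : z ∈ Submodule.span R (Set.range x)) (hz0 : z ≠ 0) : ∃ j, z ∉ B j := by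
  classical
  obtain ⟨c, rfl⟩ := Finsupp.mem_span_range_iff_exists_finsupp.1 hz
  obtain ⟨j, hj⟩ : c.support.Nonempty := by
    rw [Finsupp.support_nonempty_iff]
    rintro rfl
    exact hz0 Finsupp.sum_zero_index
  have hrest : ∑ i ∈ c.support.erase j, c i • x i ∈ B j := Submodule.sum_mem _ fun i hi =>
    Submodule.smul_mem _ _ ((hB i j).2 (Finset.ne_of_mem_erase hi))
  refine ⟨j, fun hmem => (hB j j).1 ?_ rfl⟩
  rw [Finsupp.sum, ← Finset.add_sum_erase _ _ hj, Submodule.add_mem_iff_left _ hrest,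
    Submodule.smul_mem_iff _ (Finsupp.mem_support_iff.1 hj)] at hmem
  exact hmem

theorem eventually_residual_denseRange (ι E : Type*) [Infinite ι] [TopologicalSpace E]
    [SecondCountableTopology E] : ∀ᶠ x : ι → E in residual (ι → E), DenseRange x := by
  have hmeet : ∀ U ∈ TopologicalSpace.countableBasis E,
      ∀ᶠ x : ι → E in residual (ι → E), ∃ i, x i ∈ U := by
    intro U hU
    refine residual_of_dense_open (isOpen_iff_eventually.2 ?_) fun x => ?_
    · rintro x ⟨i, hi⟩
      have hUi := (TopologicalSpace.isOpen_of_mem_countableBasis hU).mem_nhds hi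
      exact ((continuous_apply i).tendsto x |>.eventually hUi).mono fun y hy => ⟨i, hy⟩
    · classical
      obtain ⟨e, he⟩ := TopologicalSpace.nonempty_of_mem_countableBasis hU
      have hupdate : Tendsto (fun i => Function.update x i e) cofinite (𝓝 x) :=
        tendsto_pi_nhds.2 fun j => tendsto_const_nhds.congr' <|
          (eventually_cofinite_ne j).mono fun i hij => (Function.update_of_ne hij.symm e x).symm
      exact mem_closure_of_tendsto hupdate (.of_forall fun i => ⟨i, by simpa using he⟩)
  filter_upwards [(eventually_countable_ball
    (TopologicalSpace.countable_countableBasis E)).2 hmeet] with x hx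
  refine (TopologicalSpace.isBasis_countableBasis E).dense_iff.2 fun U hU _ => ?_
  obtain ⟨i, hi⟩ := hx U hU
  exact ⟨x i, hi, i, rfl⟩

section Seminorm

variable {ι 𝕜 E : Type*} [SeminormedRing 𝕜] [AddCommGroup E] [Module 𝕜 E]

/-- The subspace of vectors on which a family of seminorms tends to zero along a filter. -/
def vanishingSubmodule (p : ι → Seminorm 𝕜 E) (l : Filter ι) : Submodule 𝕜 E where
  carrier := {x | Tendsto (fun n => p n x) l (𝓝 0)}
  zero_mem' := by simpa using tendsto_const_nhds
  add_mem' := fun {x y} hx hy => squeeze_zero (fun n => apply_nonneg (p n) _)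
    (fun n => map_add_le_add (p n) x y) (by simpa using hx.add hy)
  smul_mem' := fun c x hx => by
    simpa [map_smul_eq_mul] using hx.const_mul ‖c‖

/-- The subspace of vectors on which a family of seminorms is bounded along a filter. -/
def boundedSubmodule (p : ι → Seminorm 𝕜 E) (l : Filter ι) : Submodule 𝕜 E where
  carrier := {x | l.IsBoundedUnder (· ≤ ·) fun n => p n x}
  zero_mem' := by simpa using isBoundedUnder_const
  add_mem' := fun {x y} hx hy =>
    (isBoundedUnder_le_add hx hy).mono_le (.of_forall fun n => map_add_le_add (p n) x y)
  smul_mem' := fun c x ⟨C, hC⟩ => ⟨‖c‖ * C, by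
    rw [eventually_map] at hC ⊢
    filter_upwards [hC] with n hn
    rw [map_smul_eq_mul]
    gcongr⟩

variable [TopologicalSpace E] {p : ℕ → Seminorm 𝕜 E}

/-- A sequence of seminorms is unbounded near zero if every neighbourhood of zero contains, at
arbitrarily late times, vectors with arbitrarily large values. For the averages of a sequence of
operators this is what mean sensitivity amounts to. -/
def UnboundedNearZero (p : ℕ → Seminorm 𝕜 E) : Prop :=
  ∀ K : ℝ, ∀ V ∈ 𝓝 (0 : E), ∃ᶠ n in atTop, ∃ a ∈ V, K < p n a

theorem eventually_residual_exists_forall_lt (hp : ∀ n, Continuous (p n))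
    (hnull : Dense (vanishingSubmodule p atTop : Set E)) (s : Finset ι) (k : ℕ) {ε : ℝ}
    (hε : 0 < ε) : ∀ᶠ x : ι → E in residual (ι → E), ∃ n ≥ k, ∀ i ∈ s, p n (x i) < ε := by
  refine residual_of_dense_open (isOpen_iff_eventually.2 ?_)
    (Dense.mono ?_ (dense_pi Set.univ fun _ _ => hnull))
  · rintro x ⟨n, hn, hx⟩
    have hnear : ∀ᶠ y in 𝓝 x, ∀ i ∈ s, p n (y i) < ε :=
      (eventually_all_finset _).2 fun i hi =>
        (((hp n).comp (continuous_apply i)).tendsto x).eventually_lt_const (hx i hi)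
    exact hnear.mono fun y hy => ⟨n, hn, hy⟩
  · intro y hy
    have hlate : ∀ᶠ n in atTop, ∀ i ∈ s, p n (y i) < ε :=
      (eventually_all_finset _).2 fun i _ => (hy i trivial).eventually_lt_const hε
    exact ((eventually_ge_atTop k).and hlate).exists

theorem eventually_residual_exists_le_atTop_mem_vanishingSubmodule (hp : ∀ n, Continuous (p n))
    (hnull : Dense (vanishingSubmodule p atTop : Set E)) :
    ∀ᶠ x : ℕ → E in residual (ℕ → E),
      ∃ l : Filter ℕ, l.NeBot ∧ l ≤ atTop ∧ ∀ i, x i ∈ vanishingSubmodule p l := by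
  have hgen : ∀ᶠ x : ℕ → E in residual (ℕ → E), ∀ k : ℕ,
      ∃ n ≥ k, ∀ i ∈ Finset.range k, p n (x i) < 1 / ((k : ℝ) + 1) :=
    eventually_countable_forall.2 fun k =>
      eventually_residual_exists_forall_lt hp hnull _ k Nat.one_div_pos_of_nat
  filter_upwards [hgen] with x hx
  choose m hm hlt using hx
  refine ⟨map m atTop, inferInstance, tendsto_atTop_mono hm tendsto_id, fun i => ?_⟩
  refine tendsto_map' (squeeze_zero' (.of_forall fun k => apply_nonneg (p (m k)) (x i)) ?_
    tendsto_one_div_add_atTop_nhds_zero_nat)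
  filter_upwards [eventually_gt_atTop i] with k hk
  exact (hlt k i (Finset.mem_range.2 hk)).le

theorem eventually_residual_exists_lt_and_forall_lt [ContinuousAdd E] (hp : ∀ n, Continuous (p n))
    (hnull : Dense (vanishingSubmodule p atTop : Set E)) (hunbdd : UnboundedNearZero p)
    {s : Finset ι} {j : ι} (hj : j ∉ s) (k : ℕ) (K : ℝ) :
    ∀ᶠ x : ι → E in residual (ι → E),
      ∃ n ≥ k, K < p n (x j) ∧ ∀ i ∈ s, p n (x i) < 1 := by
  classical
  refine residual_of_dense_open (isOpen_iff_eventually.2 ?_) (dense_iff_inter_open.2 ?_)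
  · rintro x ⟨n, hn, hxj, hx⟩
    have hcont : ∀ i, Tendsto (fun y : ι → E => p n (y i)) (𝓝 x) (𝓝 (p n (x i))) := fun i =>
      ((hp n).comp (continuous_apply i)).tendsto x
    filter_upwards [(hcont j).eventually_const_lt hxj,
      (eventually_all_finset _).2 fun i hi => (hcont i).eventually_lt_const (hx i hi)]
      with y hyj hy
    exact ⟨n, hn, hyj, hy⟩
  · intro U hU hUne
    obtain ⟨y, hyU, hy⟩ := (dense_pi Set.univ fun _ _ => hnull).inter_open_nonempty U hU hUne
    have hlate : ∀ i, ∀ᶠ n in atTop, p n (y i) < 1 := fun i =>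
      (hy i trivial).eventually_lt_const one_pos
    have hV : ∀ᶠ a in 𝓝 (0 : E), y + Pi.single j a ∈ U :=
      (continuous_const.add (continuous_single j)).tendsto' 0 y (by simp) |>.eventually
        (hU.mem_nhds hyU)
    obtain ⟨n, ⟨a, haU, ha⟩, hn, hyj, hys⟩ := ((hunbdd (K + 1) _ hV).and_eventually
      ((eventually_ge_atTop k).and ((hlate j).and
        ((eventually_all_finset s).2 fun i _ => hlate i)))).exists
    refine ⟨y + Pi.single j a, haU, n, hn, ?_, fun i hi => ?_⟩
    · have : p n a ≤ p n (y j + a) + p n (y j) := by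
        simpa using map_sub_le_add (p n) (y j + a) (y j)
      rw [Pi.add_apply, Pi.single_eq_same]
      linarith
    · rw [Pi.add_apply, Pi.single_eq_of_ne (ne_of_mem_of_not_mem hi hj), add_zero]
      exact hys i hi

theorem eventually_residual_exists_le_atTop_mem_boundedSubmodule_iff [ContinuousAdd E]
    (hp : ∀ n, Continuous (p n)) (hnull : Dense (vanishingSubmodule p atTop : Set E))
    (hunbdd : UnboundedNearZero p) (j : ℕ) :
    ∀ᶠ x : ℕ → E in residual (ℕ → E),
      ∃ l ≤ atTop, ∀ i, x i ∈ boundedSubmodule p l ↔ i ≠ j := by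
  have hgen : ∀ᶠ x : ℕ → E in residual (ℕ → E), ∀ k : ℕ,
      ∃ n ≥ k, k < p n (x j) ∧ ∀ i ∈ (Finset.range k).erase j, p n (x i) < 1 :=
    eventually_countable_forall.2 fun k =>
      eventually_residual_exists_lt_and_forall_lt hp hnull hunbdd (Finset.notMem_erase _ _) k k
  filter_upwards [hgen] with x hx
  choose n hn hj hlt using hx
  refine ⟨map n atTop, tendsto_atTop_mono hn tendsto_id, fun i => ⟨?_, fun hij => ?_⟩⟩
  · rintro hb rfl
    have hblow : Tendsto (fun k => p (n k) (x i)) atTop atTop :=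
      tendsto_atTop_mono (fun k => (hj k).le) tendsto_natCast_atTop_atTop
    exact not_isBoundedUnder_of_tendsto_atTop hblow hb
  · refine isBoundedUnder_of_eventually_le (a := 1) ?_
    rw [eventually_map]
    filter_upwards [eventually_gt_atTop i] with k hk
    exact (hlt k i (Finset.mem_erase.2 ⟨hij, Finset.mem_range.2 hk⟩)).le

end Seminorm

theorem exists_dense_absolutelyMeanIrregular_manifold_general {𝕜 E : Type*}
    [NormedDivisionRing 𝕜] [AddCommGroup E] [Module 𝕜 E] [TopologicalSpace E] [ContinuousAdd E]
    [SecondCountableTopology E] [BaireSpace (ℕ → E)] {p : ℕ → Seminorm 𝕜 E}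
    (hp : ∀ n, Continuous (p n)) (hnull : Dense (vanishingSubmodule p atTop : Set E))
    (hunbdd : UnboundedNearZero p) :
    ∃ Z : Submodule 𝕜 E, Dense (Z : Set E) ∧ ∀ z ∈ Z, z ≠ 0 →
      liminf (fun n => (p n z : EReal)) atTop = 0 ∧
        limsup (fun n => (p n z : EReal)) atTop = ⊤ := by
  have hgen := (eventually_residual_denseRange ℕ E).and
    ((eventually_residual_exists_le_atTop_mem_vanishingSubmodule hp hnull).and
      (eventually_countable_forall.2
        (eventually_residual_exists_le_atTop_mem_boundedSubmodule_iff hp hnull hunbdd)))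
  obtain ⟨x, hx, ⟨l, _, hl, hxnull⟩, hxbdd⟩ := (dense_of_mem_residual hgen).nonempty
  choose b hb hmem using hxbdd
  refine ⟨Submodule.span 𝕜 (Set.range x), hx.mono Submodule.subset_span, fun z hz hz0 => ⟨?_, ?_⟩⟩
  · have hznull : z ∈ vanishingSubmodule p l :=
      Submodule.span_le.2 (Set.range_subset_iff.2 hxnull) hz
    exact liminf_coe_ereal_eq_zero_of_tendsto hl (fun n => apply_nonneg (p n) z) hznull
  · obtain ⟨j, hj⟩ := exists_notMem_of_mem_span_range (fun i j => hmem j i) hz hz0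
    exact limsup_coe_ereal_eq_top_of_not_isBoundedUnder fun hbdd => hj (hbdd.mono (hb j))

/-- The average `avg T · n` as a seminorm. -/
noncomputable def avgSeminorm (T : ℕ → X →L[ℝ] Y) (n : ℕ) : Seminorm ℝ X :=
  Seminorm.of (fun x => avg T x n)
    (fun x y => by
      simp only [avg, ← add_div, ← Finset.sum_add_distrib, map_add]
      gcongr
      exact norm_add_le _ _)
    (fun c x => by simp only [avg, map_smul, norm_smul, ← Finset.mul_sum, mul_div_assoc])

theorem coe_avgSeminorm (T : ℕ → X →L[ℝ] Y) (n : ℕ) :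
    ⇑(avgSeminorm T n) = fun x => avg T x n := rfl

theorem continuous_avgSeminorm (T : ℕ → X →L[ℝ] Y) (n : ℕ) : Continuous (avgSeminorm T n) := by
  simp only [coe_avgSeminorm, avg]
  fun_prop

theorem mavg_eq_avgSeminorm_sub (T : ℕ → X →L[ℝ] Y) (x y : X) (n : ℕ) :
    mavg T x y n = avgSeminorm T n (x - y) := by
  simp only [coe_avgSeminorm, mavg, avg, map_sub]

theorem dense_vanishingSubmodule_avgSeminorm {T : ℕ → X →L[ℝ] Y}
    (hdense : Dense {q : X × X | Tendsto (mavg T q.1 q.2) atTop (𝓝 0)}) :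
    Dense (vanishingSubmodule (avgSeminorm T) atTop : Set X) := by
  have hsurj : Function.Surjective fun q : X × X => q.1 - q.2 := fun x => ⟨(x, 0), sub_zero x⟩
  refine (hsurj.denseRange.dense_image (continuous_fst.sub continuous_snd) hdense).mono ?_
  rintro _ ⟨q, hq, rfl⟩
  exact hq.congr (mavg_eq_avgSeminorm_sub T q.1 q.2)

theorem MeanSensitive.unboundedNearZero_avgSeminorm {T : ℕ → X →L[ℝ] Y}
    (hsens : MeanSensitive T) : UnboundedNearZero (avgSeminorm T) := by
  intro K V hV
  obtain ⟨δ, hδ, hs⟩ := hsens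
  obtain ⟨ε, hε, hεV⟩ := Metric.mem_nhds_iff.1 hV
  obtain ⟨c, hc, hKc⟩ : ∃ c : ℝ, 0 < c ∧ K < c * δ :=
    ((eventually_gt_atTop 0).and
      ((tendsto_id.atTop_mul_const hδ).eventually_gt_atTop K)).exists
  obtain ⟨y, hy, hlim⟩ := hs 0 (ε / c) (by positivity)
  have hcy : c • y ∈ V := hεV <| by
    rw [zero_sub, norm_neg, lt_div_iff₀' hc] at hy
    rwa [mem_ball_zero_iff, norm_smul, Real.norm_of_nonneg hc.le]
  refine (frequently_lt_of_lt_limsup (h := hlim)).mono fun n hn => ⟨c • y, hcy, ?_⟩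
  rw [EReal.coe_lt_coe_iff, mavg_eq_avgSeminorm_sub, zero_sub, map_neg_eq_map] at hn
  calc K < c * δ := hKc
    _ ≤ c * avgSeminorm T n y := by gcongr
    _ = avgSeminorm T n (c • y) := by rw [map_smul_eq_mul, Real.norm_of_nonneg hc.le]

/-- If the mean asymptotic relation is dense and `(T i)` is mean sensitive, then
`(T i)` has a dense absolutely mean irregular manifold, i.e. a dense vector subspace
all of whose non-zero vectors are absolutely mean irregular. -/
theorem exists_dense_absolutelyMeanIrregular_manifold
    [CompleteSpace X] [TopologicalSpace.SeparableSpace X] (T : ℕ → X →L[ℝ] Y)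
    (hdense : Dense {p : X × X | Filter.Tendsto (mavg T p.1 p.2) Filter.atTop (nhds 0)})
    (hsens : MeanSensitive T) :
    ∃ Z : Submodule ℝ X, Dense (Z : Set X) ∧
      ∀ z ∈ Z, z ≠ 0 → (ainf T z = 0 ∧ asup T z = ⊤) := by
  have := UniformSpace.secondCountable_of_separable X
  exact exists_dense_absolutelyMeanIrregular_manifold_general (p := avgSeminorm T)
    (continuous_avgSeminorm T) (dense_vanishingSubmodule_avgSeminorm hdense)
    hsens.unboundedNearZero_avgSeminorm
end

section
/- Let (T_i)_{i=1}^∞ be a submultiplicative sequence of bounded linear operators on a Banach space X. If there exists an absolutely mean semi-irregular vector, then (T_i) is mean sensitive. -/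
open Filter Topology

variable {X Y : Type*} [NormedAddCommGroup X] [NormedSpace ℝ X]
  [NormedAddCommGroup Y] [NormedSpace ℝ Y]

/-- The sequence `(T i)` is submultiplicative: `‖T (i+m) z‖ ≤ C ‖T i (T m z)‖`
for all `z` and all indices `i, m ≥ 1`. -/
def Submultiplicative (T : ℕ → X →L[ℝ] X) : Prop :=
  ∃ C : ℝ, 0 < C ∧ ∀ z : X, ∀ i m : ℕ, 1 ≤ i → 1 ≤ m →
    ‖T (i + m) z‖ ≤ C * ‖T i (T m z)‖

/-!
A vector `x` with `ainf T x = 0` has arbitrarily small iterates `T m x`, and submultiplicativity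
makes the mean orbits of all of them large: the first `m` terms do not affect the upper Cesàro
average, so `asup T x ≤ C * asup T (T m x)` with `C` independent of `m`. By linearity, adding such
small vectors to an arbitrary point yields mean sensitivity.
-/

theorem sum_Icc_one_le_sum_add_sum_shift {M : Type*} [AddCommMonoid M] [PartialOrder M]
    [IsOrderedAddMonoid M] {f : ℕ → M} (hf : ∀ i, 0 ≤ f i) (m n : ℕ) :
    ∑ i ∈ Finset.Icc 1 n, f i ≤ ∑ i ∈ Finset.Icc 1 m, f i + ∑ i ∈ Finset.Icc 1 n, f (i + m) := by
  simp only [← Finset.Ico_add_one_right_eq_Icc]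
  calc ∑ i ∈ Finset.Ico 1 (n + 1), f i
      ≤ ∑ i ∈ Finset.Ico 1 (n + 1 + m), f i :=
        Finset.sum_le_sum_of_subset_of_nonneg
          (Finset.Ico_subset_Ico_right (Nat.le_add_right _ _)) fun i _ _ => hf i
    _ = ∑ i ∈ Finset.Ico 1 (m + 1), f i + ∑ i ∈ Finset.Ico (m + 1) (n + 1 + m), f i :=
        (Finset.sum_Ico_consecutive f (by lia) (by lia)).symm
    _ = ∑ i ∈ Finset.Ico 1 (m + 1), f i + ∑ i ∈ Finset.Ico 1 (n + 1), f (i + m) := by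
        rw [Finset.sum_Ico_add', Nat.add_comm 1 m]

theorem msup_eq_asup_sub (T : ℕ → X →L[ℝ] Y) (x y : X) : msup T x y = asup T (x - y) := by
  simp only [msup, asup, mavg, avg, map_sub]

section Averages

variable {T : ℕ → X →L[ℝ] Y}

theorem meanSensitive_iff_exists_small_lt_asup :
    MeanSensitive T ↔
      ∃ δ : ℝ, 0 < δ ∧ ∀ ε : ℝ, 0 < ε → ∃ z : X, ‖z‖ < ε ∧ (δ : EReal) < asup T z := by
  simp only [MeanSensitive, msup_eq_asup_sub]
  refine exists_congr fun δ => and_congr_right fun _ => ⟨fun h ε hε => ?_, fun h x ε hε => ?_⟩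
  · obtain ⟨y, hy, hδ⟩ := h 0 ε hε
    exact ⟨0 - y, hy, hδ⟩
  · obtain ⟨z, hz, hδ⟩ := h ε hε
    exact ⟨x - z, by rwa [sub_sub_cancel], by rwa [sub_sub_cancel]⟩

theorem le_avg_of_forall_le_norm {x : X} {ε : ℝ} (h : ∀ i, 1 ≤ i → ε ≤ ‖T i x‖) {n : ℕ}
    (hn : 1 ≤ n) : ε ≤ avg T x n := by
  have hsum : (n : ℝ) * ε ≤ ∑ i ∈ Finset.Icc 1 n, ‖T i x‖ := by
    simpa using Finset.card_nsmul_le_sum (Finset.Icc 1 n) (fun i => ‖T i x‖) ε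
      fun i hi => h i (Finset.mem_Icc.1 hi).1
  rwa [avg, le_div_iff₀' (by exact_mod_cast hn)]

theorem exists_norm_lt_of_ainf_lt {x : X} {ε : ℝ} (h : ainf T x < ε) :
    ∃ m, 1 ≤ m ∧ ‖T m x‖ < ε := by
  by_contra! hle
  have havg : ∀ᶠ n in atTop, (ε : EReal) ≤ avg T x n := by
    filter_upwards [eventually_ge_atTop 1] with n hn
    exact_mod_cast le_avg_of_forall_le_norm hle hn
  exact h.not_ge (le_liminf_of_le (by isBoundedDefault) havg)

theorem avg_le_sum_div_add_mul_avg_of_norm_shift_le {x y : X} {C : ℝ} {m : ℕ}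
    (h : ∀ i, 1 ≤ i → ‖T (i + m) x‖ ≤ C * ‖T i y‖) (n : ℕ) :
    avg T x n ≤ (∑ i ∈ Finset.Icc 1 m, ‖T i x‖) / n + C * avg T y n := by
  rw [avg, avg, mul_div_assoc', ← add_div, Finset.mul_sum]
  gcongr
  calc ∑ i ∈ Finset.Icc 1 n, ‖T i x‖
      ≤ ∑ i ∈ Finset.Icc 1 m, ‖T i x‖ + ∑ i ∈ Finset.Icc 1 n, ‖T (i + m) x‖ :=
        sum_Icc_one_le_sum_add_sum_shift (fun i => norm_nonneg (T i x)) m n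
    _ ≤ ∑ i ∈ Finset.Icc 1 m, ‖T i x‖ + ∑ i ∈ Finset.Icc 1 n, C * ‖T i y‖ := by
        gcongr with i hi
        exact h i (Finset.mem_Icc.1 hi).1

theorem asup_le_mul_asup_of_norm_shift_le {x y : X} {C : ℝ} (hC : 0 ≤ C) {m : ℕ}
    (h : ∀ i, 1 ≤ i → ‖T (i + m) x‖ ≤ C * ‖T i y‖) : asup T x ≤ C * asup T y := by
  set K : ℝ := ∑ i ∈ Finset.Icc 1 m, ‖T i x‖
  have hhead : limsup (fun n : ℕ => ((K / n : ℝ) : EReal)) atTop = 0 :=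
    ((continuous_coe_real_ereal.tendsto 0).comp
      (tendsto_const_div_atTop_nhds_zero_nat K)).limsup_eq
  calc asup T x
      ≤ limsup (fun n : ℕ => ((K / n : ℝ) : EReal) + C * avg T y n) atTop :=
        limsup_le_limsup <| .of_forall fun n =>
          EReal.coe_le_coe_iff.2 (avg_le_sum_div_add_mul_avg_of_norm_shift_le h n)
    _ ≤ limsup (fun n : ℕ => ((K / n : ℝ) : EReal)) atTop
          + limsup (fun n => (C : EReal) * avg T y n) atTop :=
        EReal.limsup_add_le (.inl (by simp [hhead])) (.inl (by simp [hhead]))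
    _ = C * asup T y := by
        rw [hhead, zero_add, EReal.limsup_const_mul_of_nonneg_of_ne_top (by exact_mod_cast hC)
          (EReal.coe_ne_top C), asup]

end Averages

theorem meanSensitive_of_semiIrregular_general {T : ℕ → X →L[ℝ] X} (hsub : Submultiplicative T)
    {x : X} (hsmall : ∀ ε : ℝ, 0 < ε → ∃ m, 1 ≤ m ∧ ‖T m x‖ < ε) (hpos : 0 < asup T x) :
    MeanSensitive T := by
  obtain ⟨C, hC, hT⟩ := hsub
  obtain ⟨a, ha', hax⟩ := EReal.lt_iff_exists_real_btwn.1 hpos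
  have ha : 0 < a := by exact_mod_cast ha'
  have hC' : (0 : EReal) < C := by exact_mod_cast hC
  refine meanSensitive_iff_exists_small_lt_asup.2 ⟨a / C, div_pos ha hC, fun ε hε => ?_⟩
  obtain ⟨m, hm, hmε⟩ := hsmall ε hε
  have hmul : (a : EReal) < C * asup T (T m x) :=
    hax.trans_le (asup_le_mul_asup_of_norm_shift_le hC.le fun i hi => hT x i m hi hm)
  refine ⟨T m x, hmε, ?_⟩
  rwa [EReal.coe_div, EReal.div_lt_iff hC' (EReal.coe_ne_top C), mul_comm]

/-- A submultiplicative sequence of operators on a Banach space admitting an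
absolutely mean semi-irregular vector is mean sensitive. -/
theorem meanSensitive_of_semiIrregular [CompleteSpace X] (T : ℕ → X →L[ℝ] X)
    (hsub : Submultiplicative T)
    (h : ∃ x : X, ainf T x = 0 ∧ 0 < asup T x) :
    MeanSensitive T := by
  obtain ⟨x, hinf, hsup⟩ := h
  exact meanSensitive_of_semiIrregular_general hsub
    (fun ε hε => exists_norm_lt_of_ainf_lt (by rw [hinf]; exact_mod_cast hε)) hsup
end
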